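/- Let F be a field of characteristic p (possibly 0) with algebraic closure F̄, let d ≥ 1, and let f ∈ F[t][x₁,…,x_d] be square-free as an element of F̄[t][x₁,…,x_d]. Let a₁, b₁, c₁, …, a_d, b_d, c_d ∈ F[t] with gcd(a_i, b_i) = 1 for each i, and let Ψ : F[t][x₁,…,x_d] → F[t][x₁,…,x_{2d}] be the F[t]-algebra homomorphism with Ψ(x_i) = a_i·x_i + b_i·x_{d+i} + c_i for i = 1,…,d. If at least one of the following holds, then Ψ(f) is separable in t: (1) p = 0 or p > M·deg_{x⃗} f + deg_t f, where M is the maximum of the degrees of all a_i, b_i, c_i and deg_{x⃗} f is the total degree of f in (x₁,…,x_d); (2) for every i = 1,…,d, a_i ≠ 0 and b_i/a_i ∉ F(t^p). -/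

import Mathlib

/-- `f ∈ F[t][x_i : i ∈ σ]` is separable in `t`: viewed as a univariate polynomial in `t`
with coefficients in the rational function field `F(x_i : i ∈ σ)`, it is separable. -/
noncomputable def sepInT {F : Type*} [Field F] {σ : Type*}
    (f : MvPolynomial σ (Polynomial F)) : Prop :=
  Polynomial.Separable
    (MvPolynomial.eval₂
      (Polynomial.mapRingHom
        ((algebraMap (MvPolynomial σ F) (FractionRing (MvPolynomial σ F))).comp MvPolynomial.C))
      (fun i => Polynomial.C
        (algebraMap (MvPolynomial σ F) (FractionRing (MvPolynomial σ F)) (MvPolynomial.X i)))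
      f)

/-- The degree in `t` of `f ∈ F[t][x₁,…,x_d]`. -/
noncomputable def degT {F : Type*} [CommRing F] {σ : Type*}
    (f : MvPolynomial σ (Polynomial F)) : ℕ :=
  f.support.sup fun m => (f.coeff m).natDegree

/-- The condition that the rational function `b/a ∈ F(t)` does not lie in the subfield
`F(t^p)` generated over (the image of) `F` by `t^p`, where `p = ringChar F`. -/
def notInFtp (F : Type*) [Field F] (a b : Polynomial F) : Prop :=
  (algebraMap (Polynomial F) (RatFunc F)) b / (algebraMap (Polynomial F) (RatFunc F)) a ∉
    Subfield.closure (Set.range (RatFunc.C (K := F)) ∪ {RatFunc.X ^ ringChar F})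

namespace LinSub
open Polynomial in
theorem exists_bad_factor {A L : Type*} [CommRing A] [IsDomain A] [UniqueFactorizationMonoid A]
    [Field L] [Algebra A L] [IsFractionRing A L] (g : A[X]) (hg : Squarefree g)
    (hns : ¬ (g.map (algebraMap A L)).Separable) :
    ∃ q : A[X], q ∣ g ∧ 0 < q.natDegree ∧ derivative q = 0 ∧ ¬ IsUnit q := by
  classical
  have hinj : Function.Injective (algebraMap A L) := IsFractionRing.injective A L
  let : NormalizedGCDMonoid A := Classical.choice inferInstance
  have hg0 : g ≠ 0 := hg.ne_zero
  have hgm : g.map (algebraMap A L) ≠ 0 := (Polynomial.map_ne_zero_iff hinj).2 hg0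
  rw [separable_def] at hns
  obtain ⟨Q, hQi, hQ1, hQ2⟩ : ∃ Q : L[X], Irreducible Q ∧ Q ∣ g.map (algebraMap A L) ∧
      Q ∣ derivative (g.map (algebraMap A L)) := by
    by_contra hcon
    push Not at hcon
    apply hns
    apply isCoprime_of_irreducible_dvd
    · rintro ⟨h, -⟩; exact hgm h
    · intro z hz h1 h2
      exact hcon z hz h1 h2
  set n := IsLocalization.integerNormalization (nonZeroDivisors A) Q with hn
  obtain ⟨b, hb₁, hb₂⟩ := IsLocalization.integerNormalization_spec (nonZeroDivisors A) Q
  have hb0 : algebraMap A L b ≠ 0 := by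
    rw [Ne, map_eq_zero_iff _ hinj]; exact nonZeroDivisors.ne_zero hb₁
  set q := n.primPart with hq
  have hqp : q.IsPrimitive := isPrimitive_primPart n
  have hmap : n.map (algebraMap A L) = C (algebraMap A L b) * Q := by
    rw [hn]
    rw [Algebra.smul_def, Polynomial.algebraMap_apply] at hb₂
    exact hb₂
  have hn0 : n ≠ 0 := by
    intro h
    rw [h, Polynomial.map_zero] at hmap
    exact mul_ne_zero (by simpa using hb0) hQi.ne_zero hmap.symm
  have hc0 : algebraMap A L n.content ≠ 0 := by
    rw [Ne, map_eq_zero_iff _ hinj, content_eq_zero_iff]; exact hn0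
  have hmap2 : n.map (algebraMap A L) = C (algebraMap A L n.content) * q.map (algebraMap A L) := by
    conv_lhs => rw [n.eq_C_content_mul_primPart]
    rw [Polynomial.map_mul, map_C]
  have u1 : IsUnit (C (algebraMap A L b)) := isUnit_C.2 (isUnit_iff_ne_zero.2 hb0)
  have u2 : IsUnit (C (algebraMap A L n.content)) := isUnit_C.2 (isUnit_iff_ne_zero.2 hc0)
  have hass : Associated Q (q.map (algebraMap A L)) := by
    have h1 : Associated (C (algebraMap A L b) * Q) Q :=
      (associated_isUnit_mul_left_iff u1).2 (Associated.refl _)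
    have h2 : Associated (C (algebraMap A L n.content) * q.map (algebraMap A L)) (q.map (algebraMap A L)) :=
      (associated_isUnit_mul_left_iff u2).2 (Associated.refl _)
    rw [← hmap2, hmap] at h2
    exact h1.symm.trans h2
  have hqi' : Irreducible (q.map (algebraMap A L)) := hass.irreducible hQi
  have hqi : Irreducible q := (hqp.irreducible_iff_irreducible_map_fraction_map (K := L)).2 hqi'
  have d1 : q ∣ g := hqp.dvd_of_fraction_map_dvd_fraction_map (K := L) (hass.symm.dvd.trans hQ1)
  have d2 : q ∣ derivative g := by
    apply hqp.dvd_of_fraction_map_dvd_fraction_map (K := L)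
    rw [← derivative_map]
    exact hass.symm.dvd.trans hQ2
  have hdeg : 0 < q.natDegree := by
    have := hqi'.natDegree_pos
    rwa [natDegree_map_eq_of_injective hinj] at this
  refine ⟨q, d1, hdeg, ?_, hqi.not_isUnit⟩
  obtain ⟨h, rfl⟩ := d1
  rw [derivative_mul] at d2
  have d3 : q ∣ derivative q * h := (dvd_add_left (dvd_mul_right q _)).1 d2
  rcases hqi.prime.dvd_or_dvd d3 with d4 | d4
  · by_contra hne
    have := natDegree_le_of_dvd d4 hne
    have := natDegree_derivative_lt hdeg.ne'
    omega
  · exact absurd (hg q (mul_dvd_mul_left q d4)) hqi.not_isUnit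

noncomputable def swp (σ K : Type*) [CommRing K] :
    MvPolynomial σ (Polynomial K) ≃+* Polynomial (MvPolynomial σ K) :=
  RingEquiv.ofRingHom
    (MvPolynomial.eval₂Hom (Polynomial.mapRingHom MvPolynomial.C)
      (fun i => Polynomial.C (MvPolynomial.X i)))
    (Polynomial.eval₂RingHom (MvPolynomial.map Polynomial.C) (MvPolynomial.C Polynomial.X))
    (by
      apply Polynomial.ringHom_ext'
      · apply MvPolynomial.ringHom_ext <;> intros <;> simp
      · simp)
    (by
      apply MvPolynomial.ringHom_ext'
      · apply Polynomial.ringHom_ext <;> intros <;> simp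
      · intros; simp)

theorem swp_C {σ K : Type*} [CommRing K] (r : Polynomial K) :
    swp σ K (MvPolynomial.C r) = r.map MvPolynomial.C := by
  simp [swp]

theorem swp_X {σ K : Type*} [CommRing K] (i : σ) :
    swp σ K (MvPolynomial.X i) = Polynomial.C (MvPolynomial.X i) := by
  simp [swp]

theorem coeff_swp {σ K : Type*} [CommRing K] (h : MvPolynomial σ (Polynomial K)) (m : σ →₀ ℕ)
    (n : ℕ) : ((swp σ K h).coeff n).coeff m = (h.coeff m).coeff n := by
  classical
  induction h using MvPolynomial.induction_on' with
  | add p q hp hq => simp [hp, hq]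
  | monomial k a =>
    have : swp σ K (MvPolynomial.monomial k a)
        = a.map MvPolynomial.C * Polynomial.C (MvPolynomial.monomial k 1) := by
      rw [MvPolynomial.monomial_eq, map_mul, swp_C, MvPolynomial.monomial_eq, Finsupp.prod,
        Finsupp.prod, map_prod, map_one, one_mul, map_prod]
      simp only [map_pow, swp_X]
    rw [this, Polynomial.coeff_mul_C, Polynomial.coeff_map, MvPolynomial.coeff_C_mul,
      MvPolynomial.coeff_monomial, MvPolynomial.coeff_monomial]
    split_ifs <;> simp

/-- t-derivative. -/
noncomputable def dt {σ K : Type*} [CommRing K] (h : MvPolynomial σ (Polynomial K)) :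
    MvPolynomial σ (Polynomial K) := (swp σ K).symm (Polynomial.derivative (swp σ K h))

theorem coeff_dt {σ K : Type*} [CommRing K] (h : MvPolynomial σ (Polynomial K)) (m : σ →₀ ℕ) :
    (dt h).coeff m = Polynomial.derivative (h.coeff m) := by
  ext n
  rw [← coeff_swp, dt, RingEquiv.apply_symm_apply, Polynomial.coeff_derivative,
    Polynomial.coeff_derivative, ← coeff_swp]
  have : ((n : MvPolynomial σ K) + 1) = MvPolynomial.C ((n : K) + 1) := by simp
  rw [this, mul_comm, MvPolynomial.coeff_C_mul, mul_comm]

theorem dt_add {σ K : Type*} [CommRing K] (f g : MvPolynomial σ (Polynomial K)) :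
    dt (f + g) = dt f + dt g := by simp [dt]

theorem dt_mul {σ K : Type*} [CommRing K] (f g : MvPolynomial σ (Polynomial K)) :
    dt (f * g) = dt f * g + f * dt g := by simp [dt]

theorem dt_C {σ K : Type*} [CommRing K] (r : Polynomial K) :
    dt (MvPolynomial.C r : MvPolynomial σ (Polynomial K))
      = MvPolynomial.C (Polynomial.derivative r) := by
  rw [dt, swp_C, Polynomial.derivative_map, ← swp_C, RingEquiv.symm_apply_apply]

theorem dt_X {σ K : Type*} [CommRing K] (i : σ) :
    dt (MvPolynomial.X i : MvPolynomial σ (Polynomial K)) = 0 := by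
  simp [dt, swp_X]

/-- chain rule -/
theorem dt_eval₂ {σ τ K : Type*} [Fintype σ] [CommRing K] (u : σ → MvPolynomial τ (Polynomial K))
    (h : MvPolynomial σ (Polynomial K)) :
    dt (MvPolynomial.eval₂Hom MvPolynomial.C u h) = MvPolynomial.eval₂Hom MvPolynomial.C u (dt h) +
      ∑ i, MvPolynomial.eval₂Hom MvPolynomial.C u (MvPolynomial.pderiv i h) * dt (u i) := by
  classical
  induction h using MvPolynomial.induction_on with
  | C a => simp [dt_C]
  | add p q hp hq =>
    simp only [map_add, dt_add, hp, hq, add_mul, Finset.sum_add_distrib]; ring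
  | mul_X p j hp =>
    simp only [map_mul, dt_mul, dt_X, hp, MvPolynomial.pderiv_mul, map_add, add_mul,
      Finset.sum_add_distrib, MvPolynomial.pderiv_X, mul_zero, map_zero, add_zero,
      MvPolynomial.eval₂Hom_X', Finset.sum_mul]
    have : ∑ x, (MvPolynomial.eval₂Hom MvPolynomial.C u) p *
        (MvPolynomial.eval₂Hom MvPolynomial.C u)
          ((Pi.single j 1 : σ → MvPolynomial σ (Polynomial K)) x) * dt (u x) =
        MvPolynomial.eval₂Hom MvPolynomial.C u p * dt (u j) := by
      rw [Finset.sum_eq_single j]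
      · simp
      · intro b _ hb; simp [Pi.single_apply, hb]
      · simp
    simp only [Pi.single_comm] at this ⊢
    rw [this]
    have h2 : ∀ x, MvPolynomial.eval₂Hom MvPolynomial.C u (MvPolynomial.pderiv x p) * u j * dt (u x)
       = MvPolynomial.eval₂Hom MvPolynomial.C u (MvPolynomial.pderiv x p) * dt (u x) * u j := by
      intro x; ring
    simp only [h2]
    ring

theorem eq_pow_of_derivs {σ K : Type*} [Field K] [PerfectField K] (p : ℕ) [hp : Fact p.Prime]
    [CharP K p] (h : MvPolynomial σ (Polynomial K)) (ht : dt h = 0)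
    (hx : ∀ i, MvPolynomial.pderiv i h = 0) : ∃ s, h = s ^ p := by
  classical
  have : ExpChar K p := ExpChar.prime hp.out
  have : PerfectRing K p := PerfectField.toPerfectRing p
  have : CharP (MvPolynomial σ (Polynomial K)) p := inferInstance
  suffices h ∈ (frobenius (MvPolynomial σ (Polynomial K)) p).range by
    obtain ⟨s, hs⟩ := this
    exact ⟨s, hs.symm⟩
  rw [h.as_sum]
  apply sum_mem
  intro m hm
  have hc : ∃ e, h.coeff m = e ^ p := by
    have h1 : Polynomial.derivative (h.coeff m) = 0 := by rw [← coeff_dt, ht]; simp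
    have h2 := Polynomial.expand_contract p h1 hp.out.ne_zero
    refine ⟨(Polynomial.contract p (h.coeff m)).map (frobeniusEquiv K p).symm.toRingHom, ?_⟩
    rw [← Polynomial.map_frobenius_expand, ← Polynomial.map_expand, h2, Polynomial.map_map]
    have : (frobenius K p).comp (frobeniusEquiv K p).symm.toRingHom = RingHom.id K := by
      ext x; simp
    rw [this, Polynomial.map_id]
  obtain ⟨e, he⟩ := hc
  have hdiv : ∀ i, p ∣ m i := by
    intro i
    by_cases hi : m i = 0
    · simp [hi]
    have h1 : (MvPolynomial.pderiv i h).coeff (m - Finsupp.single i 1) = 0 := by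
      rw [hx]; simp
    rw [MvPolynomial.coeff_pderiv] at h1
    have h2 : m - Finsupp.single i 1 + Finsupp.single i 1 = m := by
      ext j
      by_cases hj : i = j
      · subst hj; simp; omega
      · simp [Finsupp.single_apply, hj]
    rw [h2] at h1
    have h3 := (mul_eq_zero.1 h1).resolve_left (MvPolynomial.mem_support_iff.1 hm)
    have h4 : ((m i : ℕ) : Polynomial K) = 0 := by
      rw [← h3]
      simp only [Finsupp.coe_tsub, Pi.sub_apply, Finsupp.single_eq_same]
      rw [← Nat.cast_succ]; congr 1; omega
    exact (CharP.cast_eq_zero_iff (Polynomial K) p _).1 h4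
  refine ⟨MvPolynomial.monomial (m.mapRange (· / p) (by simp)) e, ?_⟩
  rw [frobenius_def, MvPolynomial.monomial_pow, he]
  have hm2 : p • m.mapRange (· / p) (by simp) = m := by
    ext i
    simp [Nat.mul_div_cancel' (hdiv i)]
  rw [hm2]

/-- The substituted variables. -/
noncomputable def uu {σ K : Type*} [CommRing K] (a b c : σ → Polynomial K) (i : σ) :
    MvPolynomial (σ ⊕ σ) (Polynomial K) :=
  MvPolynomial.C (a i) * MvPolynomial.X (Sum.inl i) +
          MvPolynomial.C (b i) * MvPolynomial.X (Sum.inr i) + MvPolynomial.C (c i)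

noncomputable def theta {σ K : Type*} [CommRing K] (a b c l m : σ → Polynomial K)
    (hlm : ∀ i, l i * a i + m i * b i = 1) :
    MvPolynomial σ (MvPolynomial σ (Polynomial K)) ≃+* MvPolynomial (σ ⊕ σ) (Polynomial K) :=
  RingEquiv.ofRingHom
    (MvPolynomial.eval₂Hom (MvPolynomial.eval₂Hom MvPolynomial.C (uu a b c))
      (fun i => MvPolynomial.C (l i) * MvPolynomial.X (Sum.inr i)
        - MvPolynomial.C (m i) * MvPolynomial.X (Sum.inl i)))
    (MvPolynomial.eval₂Hom (MvPolynomial.C.comp MvPolynomial.C)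
      (Sum.elim
        (fun i => MvPolynomial.C (MvPolynomial.C (l i) * (MvPolynomial.X i - MvPolynomial.C (c i)))
          - MvPolynomial.C (MvPolynomial.C (b i)) * MvPolynomial.X i)
        (fun i => MvPolynomial.C (MvPolynomial.C (m i) * (MvPolynomial.X i - MvPolynomial.C (c i)))
          + MvPolynomial.C (MvPolynomial.C (a i)) * MvPolynomial.X i)))
    (by
      apply MvPolynomial.ringHom_ext
      · intro r; simp
      · rintro (i | i)
        · have h := congrArg (MvPolynomial.C (σ := σ ⊕ σ)) (hlm i)
          simp only [map_add, map_mul, map_one] at h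
          simp [uu]
          linear_combination (MvPolynomial.X (Sum.inl i)) * h
        · have h := congrArg (MvPolynomial.C (σ := σ ⊕ σ)) (hlm i)
          simp only [map_add, map_mul, map_one] at h
          simp [uu]
          linear_combination (MvPolynomial.X (Sum.inr i)) * h)
    (by
      apply MvPolynomial.ringHom_ext'
      · apply MvPolynomial.ringHom_ext
        · intro r; simp
        · intro i
          have h := congrArg (fun z => MvPolynomial.C (σ := σ) (MvPolynomial.C (σ := σ) z)) (hlm i)
          simp only [map_add, map_mul, map_one] at h
          simp [uu]
          linear_combination (MvPolynomial.C (MvPolynomial.X i)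
            - MvPolynomial.C (MvPolynomial.C (c i))) * h
      · intro i
        have h := congrArg (fun z => MvPolynomial.C (σ := σ) (MvPolynomial.C (σ := σ) z)) (hlm i)
        simp only [map_add, map_mul, map_one] at h
        simp only [RingHom.comp_apply, RingHom.id_apply, MvPolynomial.eval₂Hom_X', map_sub, map_mul,
          MvPolynomial.eval₂Hom_C, Sum.elim_inl, Sum.elim_inr]
        linear_combination (MvPolynomial.X i) * h)

theorem theta_C {σ K : Type*} [CommRing K] (a b c l m : σ → Polynomial K)
    (hlm : ∀ i, l i * a i + m i * b i = 1) (h : MvPolynomial σ (Polynomial K)) :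
    theta a b c l m hlm (MvPolynomial.C h) = MvPolynomial.eval₂Hom MvPolynomial.C (uu a b c) h := by
  simp [theta]

theorem dt_uu {σ K : Type*} [CommRing K] (a b c l m : σ → Polynomial K)
    (hlm : ∀ i, l i * a i + m i * b i = 1) (i : σ) :
    dt (uu a b c i) = theta a b c l m hlm (MvPolynomial.C (MvPolynomial.C
        (Polynomial.derivative (a i) * l i + Polynomial.derivative (b i) * m i) *
          (MvPolynomial.X i - MvPolynomial.C (c i)) +
          MvPolynomial.C (Polynomial.derivative (c i))) +
        MvPolynomial.C (MvPolynomial.C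
          (a i * Polynomial.derivative (b i) - Polynomial.derivative (a i) * b i)) *
          MvPolynomial.X i) := by
  have h := congrArg (MvPolynomial.C (σ := σ ⊕ σ)) (hlm i)
  simp only [map_add, map_mul, map_one] at h
  simp [theta, uu, dt_add, dt_mul, dt_C, dt_X]
  linear_combination (-MvPolynomial.C (Polynomial.derivative (a i)) * MvPolynomial.X (Sum.inl i)
    - MvPolynomial.C (Polynomial.derivative (b i)) * MvPolynomial.X (Sum.inr i)) * h

theorem derivs_zero {σ K : Type*} [Fintype σ] [Field K] (a b c l m : σ → Polynomial K)
    (hlm : ∀ i, l i * a i + m i * b i = 1)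
    (hw : ∀ i, a i * Polynomial.derivative (b i) - Polynomial.derivative (a i) * b i ≠ 0)
    (h : MvPolynomial σ (Polynomial K))
    (h0 : dt (MvPolynomial.eval₂Hom MvPolynomial.C (uu a b c) h) = 0) :
    dt h = 0 ∧ ∀ i, MvPolynomial.pderiv i h = 0 := by
  classical
  rw [dt_eval₂] at h0
  simp only [dt_uu a b c l m hlm, ← theta_C a b c l m hlm, ← map_mul, ← map_sum, ← map_add] at h0
  rw [map_eq_zero_iff _ (theta a b c l m hlm).injective] at h0
  have hi : ∀ i, MvPolynomial.pderiv i h = 0 := by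
    intro j
    have h1 := congrArg (MvPolynomial.coeff (Finsupp.single j 1)) h0
    have hs : ∀ i : σ, (0 : σ →₀ ℕ) ≠ Finsupp.single i 1 := by
      intro i h; have := DFunLike.congr_fun h i; simp at this
    simp only [MvPolynomial.coeff_add, MvPolynomial.coeff_sum, MvPolynomial.coeff_C_mul,
      MvPolynomial.coeff_C, MvPolynomial.coeff_X, MvPolynomial.coeff_zero, hs, if_false, zero_add] at h1
    rw [Finset.sum_eq_single j] at h1
    · simp only [if_true, mul_one] at h1
      refine (mul_eq_zero.1 h1).resolve_right ?_
      rw [MvPolynomial.C_eq_zero]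
      exact hw j
    · intro i _ hij
      rw [if_neg]
      · simp
      · intro h; exact hij (Finsupp.single_left_injective one_ne_zero h)
    · simp
  refine ⟨?_, hi⟩
  simpa [hi] using h0

theorem sepInT_eq {F : Type*} [Field F] {σ : Type*} (f : MvPolynomial σ (Polynomial F)) :
    sepInT f ↔ ((swp σ F f).map
      (algebraMap (MvPolynomial σ F) (FractionRing (MvPolynomial σ F)))).Separable := by
  have : ((Polynomial.mapRingHom
      (algebraMap (MvPolynomial σ F) (FractionRing (MvPolynomial σ F)))).comp
      (swp σ F).toRingHom) = MvPolynomial.eval₂Hom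
      (Polynomial.mapRingHom
        ((algebraMap (MvPolynomial σ F) (FractionRing (MvPolynomial σ F))).comp MvPolynomial.C))
      (fun i => Polynomial.C
        (algebraMap (MvPolynomial σ F) (FractionRing (MvPolynomial σ F)) (MvPolynomial.X i))) := by
    apply MvPolynomial.ringHom_ext
    · intro r; simp [swp_C, Polynomial.map_map]
    · intro i; simp [swp_X]
  have h2 := congrArg (fun g => g f) this
  simp only [RingHom.comp_apply, MvPolynomial.coe_eval₂Hom] at h2
  rw [sepInT, ← h2]
  rfl

theorem core {σ K : Type*} [Fintype σ] [Field K] [PerfectField K]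
    (f : MvPolynomial σ (Polynomial K)) (hf : Squarefree f)
    (a b c : σ → Polynomial K) (hab : ∀ i, IsCoprime (a i) (b i)) (p : ℕ) [CharP K p]
    (hcond : (p = 0 ∨
        (swp (σ ⊕ σ) K (MvPolynomial.eval₂Hom MvPolynomial.C (uu a b c) f)).natDegree < p) ∨
      (p ≠ 0 ∧
        ∀ i, a i * Polynomial.derivative (b i) - Polynomial.derivative (a i) * b i ≠ 0)) :
    sepInT (MvPolynomial.eval₂Hom MvPolynomial.C (uu a b c) f) := by
  choose l m hlm using hab
  rw [sepInT_eq]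
  by_contra hns
  let e := (theta a b c l m hlm).trans (swp (σ ⊕ σ) K)
  have he : ∀ h, swp (σ ⊕ σ) K (MvPolynomial.eval₂Hom MvPolynomial.C (uu a b c) h)
      = e (MvPolynomial.C h) := by
    intro h; rw [← theta_C a b c l m hlm]; rfl
  have hdiv : ∀ q, q ∣ e (MvPolynomial.C f) → ∃ h, h ∣ f ∧ q = e (MvPolynomial.C h) := by
    intro q hq
    have h1 : e.symm q ∣ MvPolynomial.C f := by
      have := map_dvd e.symm hq
      rwa [RingEquiv.symm_apply_apply] at this
    obtain ⟨h, hd, hh⟩ := (MvPolynomial.dvd_C_iff_exists hf.ne_zero).1 h1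
    exact ⟨h, hd, by rw [← hh, RingEquiv.apply_symm_apply]⟩
  have hsq : Squarefree (e (MvPolynomial.C f)) := by
    intro q hq
    obtain ⟨h, hd, rfl⟩ := hdiv q ((dvd_mul_right q q).trans hq)
    have h2 : MvPolynomial.C (h * h) ∣ MvPolynomial.C (σ := σ) f := by
      have := map_dvd e.symm hq
      simpa using this
    have h3 : h * h ∣ f := by
      obtain ⟨h', hd', hh'⟩ := (MvPolynomial.dvd_C_iff_exists hf.ne_zero).1 h2
      rw [MvPolynomial.C_injective _ _ hh']; exact hd'
    exact ((hf h h3).map MvPolynomial.C).map e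
  rw [he] at hns hcond
  obtain ⟨q, hqd, hdeg, hder, hnu⟩ := exists_bad_factor _ hsq hns
  have hcase : p = 0 ∨ (e (MvPolynomial.C f)).natDegree < p → False := by
    intro hc
    have hle := Polynomial.natDegree_le_of_dvd hqd hsq.ne_zero
    have h1 := congrArg (fun z => Polynomial.coeff z (q.natDegree - 1)) hder
    simp only [Polynomial.coeff_derivative, Polynomial.coeff_zero] at h1
    rw [Nat.sub_add_cancel hdeg, ← Nat.cast_succ, Nat.succ_eq_add_one,
      Nat.sub_add_cancel hdeg] at h1
    have h2 := (mul_eq_zero.1 h1).resolve_left (by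
      rw [← Polynomial.leadingCoeff, Polynomial.leadingCoeff_eq_zero]
      rintro rfl; simp at hdeg)
    have h3 := (CharP.cast_eq_zero_iff (MvPolynomial (σ ⊕ σ) K) p _).1 h2
    rcases hc with rfl | hc
    · have := Nat.eq_zero_of_zero_dvd h3; omega
    · have := Nat.le_of_dvd hdeg h3; omega
  rcases hcond with hc | ⟨hp0, hw⟩
  · exact hcase hc
  · obtain ⟨h, hd, rfl⟩ := hdiv q hqd
    have hp : Fact p.Prime := ⟨(CharP.char_is_prime_or_zero K p).resolve_right hp0⟩
    have h0 : dt (MvPolynomial.eval₂Hom MvPolynomial.C (uu a b c) h) = 0 := by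
      rw [dt, he, hder, map_zero]
    obtain ⟨ht, hx⟩ := derivs_zero a b c l m hlm hw h h0
    obtain ⟨s, rfl⟩ := eq_pow_of_derivs p h ht hx
    have h2 : s * s ∣ f := by
      rw [← sq]; exact (pow_dvd_pow s hp.out.two_le).trans hd
    exact hnu ((((hf s h2).pow p).map MvPolynomial.C).map e)

theorem sepInT_of_map {F K : Type*} [Field F] [Field K] (φ : F →+* K) {σ : Type*}
    (g : MvPolynomial σ (Polynomial F))
    (h : sepInT (MvPolynomial.map (Polynomial.mapRingHom φ) g)) : sepInT g := by
  rw [sepInT_eq] at h ⊢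
  have hsw : swp σ K (MvPolynomial.map (Polynomial.mapRingHom φ) g)
      = (swp σ F g).map (MvPolynomial.map φ) := by
    ext n m
    rw [coeff_swp, Polynomial.coeff_map, MvPolynomial.coeff_map, MvPolynomial.coeff_map, coeff_swp]
    simp
  have hinj : Function.Injective (MvPolynomial.map (σ := σ) φ) :=
    MvPolynomial.map_injective φ φ.injective
  let ψ : FractionRing (MvPolynomial σ F) →+* FractionRing (MvPolynomial σ K) :=
    IsFractionRing.map hinj
  rw [← Polynomial.separable_map ψ, Polynomial.map_map]
  rw [hsw, Polynomial.map_map] at h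
  have : ψ.comp (algebraMap (MvPolynomial σ F) (FractionRing (MvPolynomial σ F)))
      = (algebraMap (MvPolynomial σ K) (FractionRing (MvPolynomial σ K))).comp
        (MvPolynomial.map φ) := by
    refine RingHom.ext fun x => ?_
    simp [ψ, IsFractionRing.map]
  rw [this]; exact h

theorem wronskian_ne {F : Type*} [Field F] (a b : Polynomial F) (hab : IsCoprime a b)
    (ha : a ≠ 0) (hp : ringChar F ≠ 0) (h : notInFtp F a b) :
    a * Polynomial.derivative b - Polynomial.derivative a * b ≠ 0 := by
  intro h0
  have hz : ∀ q : Polynomial F, q ∣ Polynomial.derivative q → Polynomial.derivative q = 0 := by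
    intro q hq
    by_contra hne
    have h1 := Polynomial.natDegree_le_of_dvd hq hne
    have h2 : q.natDegree ≠ 0 := by
      intro h
      rw [Polynomial.eq_C_of_natDegree_eq_zero h] at hne
      simp at hne
    have := Polynomial.natDegree_derivative_lt h2
    omega
  have ha' : Polynomial.derivative a = 0 := by
    apply hz
    apply hab.dvd_of_dvd_mul_right
    exact ⟨_, (sub_eq_zero.1 h0).symm⟩
  have hb' : Polynomial.derivative b = 0 := by
    apply hz
    apply hab.symm.dvd_of_dvd_mul_left
    exact ⟨_, by rw [sub_eq_zero.1 h0, mul_comm]⟩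
  have hmem : ∀ q : Polynomial F, Polynomial.derivative q = 0 →
      algebraMap (Polynomial F) (RatFunc F) q ∈
      Subfield.closure (Set.range (RatFunc.C (K := F)) ∪ {RatFunc.X ^ ringChar F}) := by
    intro q hq
    rw [← Polynomial.expand_contract (ringChar F) hq hp]
    generalize Polynomial.contract (ringChar F) q = r
    induction r using Polynomial.induction_on' with
    | add r s hr hs => rw [map_add, map_add]; exact add_mem hr hs
    | monomial n z =>
      rw [Polynomial.expand_monomial, ← Polynomial.C_mul_X_pow_eq_monomial, map_mul, map_pow,
        RatFunc.algebraMap_C, RatFunc.algebraMap_X, mul_comm n, pow_mul]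
      refine mul_mem (Subfield.subset_closure ?_) (pow_mem (Subfield.subset_closure ?_) _)
      · exact Set.mem_union_left _ ⟨z, rfl⟩
      · exact Set.mem_union_right _ (Set.mem_singleton _)
  unfold notInFtp at h
  exact h (div_mem (hmem b hb') (hmem a ha'))

theorem natDegree_bound {F : Type*} [Field F] {σ : Type*} [Fintype σ]
    (f : MvPolynomial σ (Polynomial F)) (a b c : σ → Polynomial F) :
    (swp (σ ⊕ σ) F (MvPolynomial.eval₂Hom MvPolynomial.C (uu a b c) f)).natDegree ≤
      (Finset.univ.sup fun i =>
            max (max (a i).natDegree (b i).natDegree) (c i).natDegree) * f.totalDegree +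
          degT f := by
  set M := Finset.univ.sup fun i => max (max (a i).natDegree (b i).natDegree) (c i).natDegree
    with hM
  have hu : ∀ i, (swp (σ ⊕ σ) F (uu a b c i)).natDegree ≤ M := by
    intro i
    have h1 : max (max (a i).natDegree (b i).natDegree) (c i).natDegree ≤ M :=
      Finset.le_sup (f := fun i => max (max (a i).natDegree (b i).natDegree) (c i).natDegree)
        (Finset.mem_univ i)
    simp only [max_le_iff] at h1
    rw [uu, map_add, map_add, map_mul, map_mul, swp_C, swp_C, swp_C, swp_X, swp_X]
    refine Polynomial.natDegree_add_le_of_degree_le (Polynomial.natDegree_add_le_of_degree_le ?_ ?_) ?_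
    · exact (Polynomial.natDegree_mul_C_le _ _).trans (Polynomial.natDegree_map_le.trans h1.1.1)
    · exact (Polynomial.natDegree_mul_C_le _ _).trans (Polynomial.natDegree_map_le.trans h1.1.2)
    · exact Polynomial.natDegree_map_le.trans h1.2
  rw [MvPolynomial.coe_eval₂Hom, MvPolynomial.eval₂_eq, map_sum]
  apply Polynomial.natDegree_sum_le_of_forall_le
  intro m hm
  rw [map_mul, map_prod, swp_C]
  refine Polynomial.natDegree_mul_le.trans ?_
  rw [add_comm]
  apply add_le_add
  · refine (Polynomial.natDegree_prod_le _ _).trans ?_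
    calc _ ≤ ∑ i ∈ m.support, m i * M := by
          apply Finset.sum_le_sum
          intro i _
          rw [map_pow]
          exact Polynomial.natDegree_pow_le.trans (Nat.mul_le_mul_left _ (hu i))
      _ = M * m.sum (fun _ n => n) := by
          rw [← Finset.sum_mul, mul_comm]; rfl
      _ ≤ _ := Nat.mul_le_mul_left _ (MvPolynomial.le_totalDegree hm)
  · exact Polynomial.natDegree_map_le.trans
      (Finset.le_sup (f := fun m => (f.coeff m).natDegree) hm)

end LinSub

/-- Let `F` be a field of characteristic `p` (possibly `0`), `d ≥ 1`, and
`f ∈ F[t][x₁,…,x_d]` square-free over the algebraic closure. Let `a_i, b_i, c_i ∈ F[t]` with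
`gcd(a_i, b_i) = 1`, and let `Ψ : F[t][x₁,…,x_d] → F[t][x₁,…,x_{2d}]` be the
`F[t]`-homomorphism `x_i ↦ a_i·x_i + b_i·x_{d+i} + c_i`. If `p = 0` or
`p > M·deg_{x⃗} f + deg_t f` (where `M` is the maximum of the degrees of all `a_i, b_i, c_i`),
or for every `i` we have `a_i ≠ 0` and `b_i/a_i ∉ F(t^p)`, then `Ψ(f)` is separable in `t`. -/
theorem linear_subst_sepInT_multivariate (F : Type*) [Field F] (d : ℕ) (hd : 1 ≤ d)
    (f : MvPolynomial (Fin d) (Polynomial F))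
    (hf : Squarefree
      (MvPolynomial.map (Polynomial.mapRingHom (algebraMap F (AlgebraicClosure F))) f))
    (a b c : Fin d → Polynomial F) (hab : ∀ i, IsRelPrime (a i) (b i))
    (hcond :
      (ringChar F = 0 ∨
        (Finset.univ.sup fun i =>
            max (max (a i).natDegree (b i).natDegree) (c i).natDegree) * f.totalDegree +
          degT f < ringChar F) ∨
      (∀ i, a i ≠ 0 ∧ notInFtp F (a i) (b i))) :
    sepInT
      (MvPolynomial.eval₂ MvPolynomial.C
        (fun i => MvPolynomial.C (a i) * MvPolynomial.X (Sum.inl i) +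
          MvPolynomial.C (b i) * MvPolynomial.X (Sum.inr i) + MvPolynomial.C (c i)) f :
        MvPolynomial (Fin d ⊕ Fin d) (Polynomial F)) := by
  let K := AlgebraicClosure F
  let φ : F →+* K := algebraMap F K
  have hab' : ∀ i, IsCoprime (a i) (b i) := fun i => (hab i).isCoprime
  have hchK : CharP K (ringChar F) := charP_of_injective_algebraMap φ.injective _
  have hinst : PerfectField K := inferInstance
  apply LinSub.sepInT_of_map φ
  have hmap : ∀ g : MvPolynomial (Fin d) (Polynomial F),
      MvPolynomial.map (Polynomial.mapRingHom φ)
        (MvPolynomial.eval₂ MvPolynomial.C (LinSub.uu a b c) g) =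
      MvPolynomial.eval₂Hom MvPolynomial.C
        (LinSub.uu (fun i => (a i).map φ) (fun i => (b i).map φ) (fun i => (c i).map φ))
        (MvPolynomial.map (Polynomial.mapRingHom φ) g) := by
    intro g
    induction g using MvPolynomial.induction_on with
    | C r => simp
    | add p q hp hq => simp only [MvPolynomial.eval₂_add, map_add, hp, hq]
    | mul_X p i hp =>
      simp only [MvPolynomial.eval₂_mul, map_mul, hp, MvPolynomial.eval₂_X, MvPolynomial.map_X,
        MvPolynomial.eval₂Hom_X']
      simp [LinSub.uu]
  have hmap' := hmap f
  unfold LinSub.uu at hmap'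
  rw [hmap']
  refine LinSub.core _ hf _ _ _ (fun i => (hab' i).map (Polynomial.mapRingHom φ)) (ringChar F) ?_
  by_cases hp : ringChar F = 0
  · exact Or.inl (Or.inl hp)
  rcases hcond with (h | h) | h
  · exact absurd h hp
  · left; right
    refine lt_of_le_of_lt ?_ h
    refine le_trans ?_ (LinSub.natDegree_bound f a b c)
    have := hmap f
    rw [← MvPolynomial.coe_eval₂Hom] at this
    rw [← this]
    apply Polynomial.natDegree_le_iff_coeff_eq_zero.2
    intro N hN
    ext1 m
    rw [LinSub.coeff_swp, MvPolynomial.coeff_map, Polynomial.coe_mapRingHom, Polynomial.coeff_map,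
      ← LinSub.coeff_swp, Polynomial.coeff_eq_zero_of_natDegree_lt hN]
    simp
  · right
    refine ⟨hp, fun i h0 => ?_⟩
    apply LinSub.wronskian_ne (a i) (b i) (hab' i) (h i).1 hp (h i).2
    apply Polynomial.map_injective φ φ.injective
    simpa [Polynomial.derivative_map] using h0
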